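/- Let λ > 0, q₊ > 0, and x₀ < 0. Let Z₁ and Z₂ be standard Gumbel random variables and N a standard Gaussian random variable, with Z₁ and N independent. Then the random variable (1/(2λ))·ln(x₀²·λ) + (1/(2λ))·Z₁ + (1/λ)·ln(q₊) + (1/(2λ))·ln(2λ) + (1/λ)·(−ln|N|) has the same distribution as (1/λ)·ln(2λ·q₊·|x₀|) + (1/λ)·Z₂; equivalently, Z₁/2 − ln|N| has the same distribution as Z₂ + (ln 2)/2. -/

import Mathlib

open MeasureTheory ProbabilityTheory Filter Topology Set

/-!
Conditionally on `N = x`, the event `Z₁ / 2 - log |N| ≤ y` has probability `exp (-t / x ^ 2)` with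
`t = exp (-2 * y)`, so the distribution function of `Z₁ / 2 - log |N|` is the Laplace transform of
`N⁻²`. Completing the square gives `x ^ 2 / 2 + t / x ^ 2 = (x - a / x) ^ 2 / 2 + a` with
`a = √(2 * t)`, and Boole's transformation `x ↦ x - a / x` preserves Lebesgue measure. Hence the
Laplace transform is `exp (-a) = exp (-√2 * exp (-y))`, a Gumbel distribution function again.
-/

section BooleTransformation

variable {a r s x : ℝ}

lemma sub_div_le_add_iff (hrs : r * s = -a) (hratio : 0 < (x - s) / x) :
    x - a / x ≤ r + s ↔ x ≤ r := by
  have hx : x ≠ 0 := by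
    rintro rfl
    simp at hratio
  have hfactor : r + s - (x - a / x) = (x - s) / x * (r - x) := by
    field_simp
    linear_combination hrs
  rw [← sub_nonneg, hfactor, mul_nonneg_iff_of_pos_left hratio, sub_nonneg]

lemma sub_div_le_add_iff_of_pos (hrs : r * s = -a) (hs : s ≤ 0) (hx : 0 < x) :
    x - a / x ≤ r + s ↔ x ≤ r :=
  sub_div_le_add_iff hrs (div_pos (by linarith) hx)

lemma sub_div_le_add_iff_of_neg (hrs : r * s = -a) (hr : 0 ≤ r) (hx : x < 0) :
    x - a / x ≤ r + s ↔ x ≤ s := by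
  rw [add_comm]
  exact sub_div_le_add_iff (mul_comm r s ▸ hrs) (div_pos_of_neg_of_neg (by linarith) hx)

lemma exists_nonneg_nonpos_add_eq_mul_eq_neg (ha : 0 ≤ a) (u : ℝ) :
    ∃ r s : ℝ, 0 ≤ r ∧ s ≤ 0 ∧ r + s = u ∧ r * s = -a := by
  have habs : |u| ≤ √(u ^ 2 + 4 * a) := Real.abs_le_sqrt (by linarith)
  have hsq : √(u ^ 2 + 4 * a) ^ 2 = u ^ 2 + 4 * a := Real.sq_sqrt (by positivity)
  obtain ⟨hneg, hpos⟩ := abs_le.1 habs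
  exact ⟨(u + √(u ^ 2 + 4 * a)) / 2, (u - √(u ^ 2 + 4 * a)) / 2, by linarith, by linarith,
    by ring, by linear_combination -hsq / 4⟩

-- Up to a null set the preimage is a union of two intervals, bounded by the roots of
-- `x ^ 2 - u * x - a` for `u = c, d`; the two roots add up to `u`, hence the lengths to `d - c`.
lemma volume_preimage_sub_div_Ioc (ha : 0 ≤ a) {c d : ℝ} (hcd : c ≤ d) :
    volume ((fun x : ℝ ↦ x - a / x) ⁻¹' Ioc c d) = volume (Ioc c d) := by
  obtain ⟨r, s, hr, hs, rfl, hrs⟩ := exists_nonneg_nonpos_add_eq_mul_eq_neg ha c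
  obtain ⟨r', s', hr', hs', rfl, hrs'⟩ := exists_nonneg_nonpos_add_eq_mul_eq_neg ha d
  have hrr' : r ≤ r' := by by_contra! h; nlinarith
  have hss' : s ≤ s' := by by_contra! h; nlinarith
  have hpreimage : (fun x : ℝ ↦ x - a / x) ⁻¹' Ioc (r + s) (r' + s')
      =ᵐ[volume] (Ioc s s' ∪ Ioc r r' : Set ℝ) := by
    filter_upwards [Measure.ae_ne volume 0] with x hx
    refine propext ?_
    change x - a / x ∈ Ioc (r + s) (r' + s') ↔ x ∈ Ioc s s' ∪ Ioc r r'
    rcases hx.lt_or_gt with hneg | hpos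
    · have hnot : x ∉ Ioc r r' := fun h ↦ by linarith [h.1]
      simp only [mem_union, hnot, or_false, mem_Ioc, ← not_le,
        sub_div_le_add_iff_of_neg hrs hr hneg, sub_div_le_add_iff_of_neg hrs' hr' hneg]
    · have hnot : x ∉ Ioc s s' := fun h ↦ by linarith [h.2]
      simp only [mem_union, hnot, false_or, mem_Ioc, ← not_le,
        sub_div_le_add_iff_of_pos hrs hs hpos, sub_div_le_add_iff_of_pos hrs' hs' hpos]
  have hdisjoint : Disjoint (Ioc s s') (Ioc r r') :=
    Ioc_disjoint_Ioc_of_le (hs'.trans hr)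
  rw [measure_congr hpreimage, measure_union hdisjoint measurableSet_Ioc, Real.volume_Ioc,
    Real.volume_Ioc, Real.volume_Ioc, ← ENNReal.ofReal_add (by linarith) (by linarith)]
  ring_nf

lemma measurePreserving_sub_div (ha : 0 ≤ a) : MeasurePreserving (fun x : ℝ ↦ x - a / x) := by
  have hmeas : Measurable fun x : ℝ ↦ x - a / x := by fun_prop
  refine ⟨hmeas, (Measure.ext_of_Ioc _ _ fun c d hcd ↦ ?_).symm⟩
  rw [Measure.map_apply hmeas measurableSet_Ioc, volume_preimage_sub_div_Ioc ha hcd.le]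

end BooleTransformation

section InverseSquareGaussian

variable {v : NNReal}

lemma gaussianPDFReal_mul_exp_neg_div_sq (hv : v ≠ 0) (a : ℝ) {x : ℝ} (hx : x ≠ 0) :
    gaussianPDFReal 0 v x * Real.exp (-(a ^ 2 / (2 * v) / x ^ 2))
      = Real.exp (-(a / v)) * gaussianPDFReal 0 v (x - a / x) := by
  have hv' : (v : ℝ) ≠ 0 := NNReal.coe_ne_zero.2 hv
  have hsquare : -(x - 0) ^ 2 / (2 * v) + -(a ^ 2 / (2 * v) / x ^ 2)
      = -(a / v) + -(x - a / x - 0) ^ 2 / (2 * v) := by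
    field_simp
    ring
  rw [gaussianPDFReal, gaussianPDFReal, mul_assoc, mul_left_comm (Real.exp _),
    ← Real.exp_add, ← Real.exp_add, hsquare]

lemma integral_exp_neg_div_sq_gaussianReal (hv : v ≠ 0) {t : ℝ} (ht : 0 ≤ t) :
    ∫ x, Real.exp (-(t / x ^ 2)) ∂gaussianReal 0 v = Real.exp (-√(2 * t / v)) := by
  have hv' : (0 : ℝ) < v := NNReal.coe_pos.2 (pos_iff_ne_zero.2 hv)
  set a : ℝ := v * √(2 * t / v) with ha
  have ha_nonneg : 0 ≤ a := by positivity
  have ht_eq : t = a ^ 2 / (2 * v) := by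
    rw [ha, mul_pow, Real.sq_sqrt (by positivity)]
    field_simp
  calc ∫ x, Real.exp (-(t / x ^ 2)) ∂gaussianReal 0 v
      = ∫ x, gaussianPDFReal 0 v x * Real.exp (-(a ^ 2 / (2 * v) / x ^ 2)) := by
        rw [integral_gaussianReal_eq_integral_smul hv, ht_eq]
        simp only [smul_eq_mul]
    _ = ∫ x, Real.exp (-(a / v)) * gaussianPDFReal 0 v (x - a / x) := by
        refine integral_congr_ae ?_
        filter_upwards [Measure.ae_ne volume 0] with x hx
        exact gaussianPDFReal_mul_exp_neg_div_sq hv a hx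
    _ = Real.exp (-(a / v)) * ∫ x, gaussianPDFReal 0 v x := by
        have hboole := measurePreserving_sub_div ha_nonneg
        rw [integral_const_mul, ← integral_map hboole.aemeasurable
          (stronglyMeasurable_gaussianPDFReal 0 v).aestronglyMeasurable, hboole.map_eq]
    _ = Real.exp (-√(2 * t / v)) := by
        rw [integral_gaussianPDFReal_eq_one 0 hv, mul_one, ha, mul_div_cancel_left₀ _ hv'.ne']

end InverseSquareGaussian

section Independence

variable {Ω α β : Type*} [MeasurableSpace Ω] [MeasurableSpace α] [MeasurableSpace β]
  {P : Measure Ω} [IsFiniteMeasure P] {X : Ω → α} {Y : Ω → β}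

lemma measureReal_prodMk_mem_eq_integral_of_indepFun (hX : AEMeasurable X P)
    (hY : AEMeasurable Y P) (hindep : IndepFun X Y P) {S : Set (α × β)} (hS : MeasurableSet S) :
    P.real {ω | (X ω, Y ω) ∈ S} = ∫ x, P.real {ω | (x, Y ω) ∈ S} ∂P.map X := by
  have hsection (x : α) : P {ω | (x, Y ω) ∈ S} = P.map Y (Prod.mk x ⁻¹' S) :=
    (Measure.map_apply_of_aemeasurable hY (measurable_prodMk_left hS)).symm
  have hjoint : P {ω | (X ω, Y ω) ∈ S} = ∫⁻ x, P {ω | (x, Y ω) ∈ S} ∂P.map X := by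
    simp only [hsection]
    rw [← Measure.prod_apply hS, ← hindep.map_prod_eq_prod_map_map hX hY,
      Measure.map_apply_of_aemeasurable (hX.prodMk hY) hS]
    rfl
  have hmeas : Measurable fun x ↦ P {ω | (x, Y ω) ∈ S} := by
    simpa only [hsection] using measurable_measure_prodMk_left hS
  simp only [measureReal_def]
  rw [hjoint, integral_toReal hmeas.aemeasurable (ae_of_all _ fun _ ↦ measure_lt_top P _)]

end Independence

section Gumbel

variable {Ω Ω' : Type*} [MeasurableSpace Ω] [MeasurableSpace Ω'] {P : Measure Ω} {P' : Measure Ω'}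
  {m β : ℝ} {Z : Ω → ℝ} {W : Ω' → ℝ}

/-- The random variable `Z` has the Gumbel distribution with location `m` and scale `β` under `P`,
expressed through its distribution function; the standard case is `m = 0`, `β = 1`. -/
def IsGumbel (m β : ℝ) (Z : Ω → ℝ) (P : Measure Ω) : Prop :=
  ∀ x : ℝ, P.real {ω | Z ω ≤ x} = Real.exp (-Real.exp (-((x - m) / β)))

namespace IsGumbel

lemma const_add_const_mul (hZ : IsGumbel m β Z P) (c : ℝ) {k : ℝ} (hk : 0 < k) :
    IsGumbel (c + k * m) (k * β) (fun ω ↦ c + k * Z ω) P := by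
  intro x
  have hevent : {ω | c + k * Z ω ≤ x} = {ω | Z ω ≤ (x - c) / k} := by
    ext ω
    rw [mem_ofPred_eq, mem_ofPred_eq, le_div_iff₀' hk, le_sub_iff_add_le']
  have hquantile : ((x - c) / k - m) / β = (x - (c + k * m)) / (k * β) := by
    rw [div_sub' hk.ne', div_div, sub_sub]
  rw [hevent, hZ, hquantile]

lemma map_eq_map [IsFiniteMeasure P] [IsFiniteMeasure P'] (hZ : IsGumbel m β Z P)
    (hW : IsGumbel m β W P') (hZm : AEMeasurable Z P) (hWm : AEMeasurable W P') :
    P.map Z = P'.map W := by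
  refine Measure.ext_of_Iic _ _ fun x ↦ ?_
  rw [← measureReal_eq_measureReal_iff,
    map_measureReal_apply_of_aemeasurable hZm measurableSet_Iic,
    map_measureReal_apply_of_aemeasurable hWm measurableSet_Iic]
  exact (hZ x).trans (hW x).symm

lemma measureReal_sub_mul_log_abs_le (hβ : β ≠ 0) (hZ : IsGumbel m (β / 2) Z P) (y : ℝ) {x : ℝ}
    (hx : x ≠ 0) :
    P.real {ω | Z ω - β * Real.log |x| ≤ y}
      = Real.exp (-(Real.exp (-(2 * ((y - m) / β))) / x ^ 2)) := by
  have hexponent : -((y + β * Real.log |x| - m) / (β / 2))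
      = -(2 * ((y - m) / β)) - Real.log (x ^ 2) := by
    rw [← sq_abs, Real.log_pow]
    field_simp
    push_cast
    ring
  simp only [sub_le_iff_le_add]
  rw [hZ, hexponent, Real.exp_sub, Real.exp_log (by positivity)]

lemma sub_mul_log_abs {N : Ω → ℝ} {v : NNReal} (hβ : β ≠ 0) (hv : v ≠ 0)
    (hZ : IsGumbel m (β / 2) Z P) (hZm : AEMeasurable Z P) (hN : HasLaw N (gaussianReal 0 v) P)
    (hindep : IndepFun Z N P) :
    IsGumbel (m + β * (Real.log (2 / v) / 2)) β (fun ω ↦ Z ω - β * Real.log |N ω|) P := by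
  intro y
  have := hN.isProbabilityMeasure
  have := nullSingletonClass_gaussianReal (μ := 0) hv
  have hS : MeasurableSet {p : ℝ × ℝ | p.2 - β * Real.log |p.1| ≤ y} :=
    measurableSet_le (by fun_prop) measurable_const
  have hscale : √(2 * Real.exp (-(2 * ((y - m) / β))) / v)
      = Real.exp (-((y - (m + β * (Real.log (2 / v) / 2))) / β)) := by
    rw [← Real.exp_log (show 0 < 2 * Real.exp (-(2 * ((y - m) / β))) / v by positivity),
      ← Real.exp_half, mul_div_right_comm, Real.log_mul (by positivity) (by positivity),
      Real.log_exp]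
    congr 1
    field_simp
    ring
  calc P.real {ω | Z ω - β * Real.log |N ω| ≤ y}
      = ∫ x, P.real {ω | Z ω - β * Real.log |x| ≤ y} ∂gaussianReal 0 v := by
        rw [← hN.map_eq]
        exact measureReal_prodMk_mem_eq_integral_of_indepFun hN.aemeasurable hZm hindep.symm hS
    _ = ∫ x, Real.exp (-(Real.exp (-(2 * ((y - m) / β))) / x ^ 2)) ∂gaussianReal 0 v := by
        refine integral_congr_ae ?_
        filter_upwards [Measure.ae_ne (gaussianReal 0 v) 0] with x hx
        exact hZ.measureReal_sub_mul_log_abs_le hβ y hx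
    _ = _ := by
        rw [integral_exp_neg_div_sq_gaussianReal hv (Real.exp_pos _).le, hscale]

lemma map_const_add_sub_mul_log_abs_eq_map {N : Ω → ℝ} {v : NNReal} [IsFiniteMeasure P']
    (hβ : 0 < β) (hv : v ≠ 0) (hZ : IsGumbel 0 1 Z P) (hZm : AEMeasurable Z P)
    (hN : HasLaw N (gaussianReal 0 v) P) (hindep : IndepFun Z N P) (hW : IsGumbel 0 1 W P')
    (hWm : AEMeasurable W P') (c : ℝ) :
    P.map (fun ω ↦ c + β / 2 * Z ω - β * Real.log |N ω|)
      = P'.map (fun ω' ↦ c + β * (Real.log (2 / v) / 2) + β * W ω') := by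
  have := hN.isProbabilityMeasure
  have hZ_affine := hZ.const_add_const_mul c (half_pos hβ)
  have hW_affine := hW.const_add_const_mul (c + β * (Real.log (2 / v) / 2)) hβ
  simp only [mul_zero, add_zero, mul_one] at hZ_affine hW_affine
  have hindep_affine : IndepFun (fun ω ↦ c + β / 2 * Z ω) N P :=
    hindep.comp (measurable_id.const_mul (β / 2) |>.const_add c) measurable_id
  exact (hZ_affine.sub_mul_log_abs hβ.ne' hv (by fun_prop) hN hindep_affine).map_eq_map
    hW_affine (by fun_prop) (by fun_prop)

end IsGumbel

end Gumbel

lemma log_two_mul_mul_mul_abs {lam q x : ℝ} (hlam : 0 < lam) (hq : 0 < q) (hx : x ≠ 0) :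
    Real.log (2 * lam * q * |x|)
      = Real.log (x ^ 2 * lam) / 2 + Real.log q + Real.log (2 * lam) / 2 + Real.log 2 / 2 := by
  have hx' : 0 < |x| := abs_pos.2 hx
  rw [← sq_abs, Real.log_mul (by positivity) hx'.ne', Real.log_mul (by positivity) hq.ne',
    Real.log_mul two_ne_zero hlam.ne', Real.log_mul (by positivity) hlam.ne', Real.log_pow]
  push_cast
  ring

/-- Convolution identity for the limit laws: if `Z₁, Z₂` are standard Gumbel, `N` is
standard Gaussian, and `Z₁` and `N` are independent, then for `λ > 0`, `q₊ > 0`, `x₀ < 0`,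
`(1/(2λ)) ln(x₀² λ) + (1/(2λ)) Z₁ + (1/λ) ln q₊ + (1/(2λ)) ln(2λ) + (1/λ)(-ln |N|)`
has the same distribution as `(1/λ) ln(2 λ q₊ |x₀|) + (1/λ) Z₂`; equivalently,
`Z₁/2 - ln |N|` has the same distribution as `Z₂ + (ln 2)/2`. -/
theorem gumbel_convolution_identity
    {Ω : Type*} [MeasurableSpace Ω] (P : Measure Ω) [IsProbabilityMeasure P]
    {Ω' : Type*} [MeasurableSpace Ω'] (P' : Measure Ω') [IsProbabilityMeasure P']
    (lam qp x₀ : ℝ) (hlam : 0 < lam) (hqp : 0 < qp) (hx₀ : x₀ < 0)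
    (Z₁ N : Ω → ℝ) (Z₂ : Ω' → ℝ)
    (hZ₁meas : Measurable Z₁) (hZ₂meas : Measurable Z₂) (hNmeas : Measurable N)
    (hZ₁ : ∀ x : ℝ, (P {ω | Z₁ ω ≤ x}).toReal = Real.exp (-Real.exp (-x)))
    (hZ₂ : ∀ x : ℝ, (P' {ω' | Z₂ ω' ≤ x}).toReal = Real.exp (-Real.exp (-x)))
    (hN : Measure.map N P = gaussianReal 0 1)
    (hindep : IndepFun Z₁ N P) :
    Measure.map (fun ω => (1 / (2 * lam)) * Real.log (x₀ ^ 2 * lam) + (1 / (2 * lam)) * Z₁ ω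
        + (1 / lam) * Real.log qp + (1 / (2 * lam)) * Real.log (2 * lam)
        + (1 / lam) * (-Real.log |N ω|)) P
      = Measure.map (fun ω' => (1 / lam) * Real.log (2 * lam * qp * |x₀|)
          + (1 / lam) * Z₂ ω') P' ∧
    Measure.map (fun ω => Z₁ ω / 2 - Real.log |N ω|) P
      = Measure.map (fun ω' => Z₂ ω' + Real.log 2 / 2) P' := by
  have hZ₁std : IsGumbel 0 1 Z₁ P := by simpa [IsGumbel, measureReal_def] using hZ₁
  have hZ₂std : IsGumbel 0 1 Z₂ P' := by simpa [IsGumbel, measureReal_def] using hZ₂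
  have hNlaw : HasLaw N (gaussianReal 0 1) P := ⟨hNmeas.aemeasurable, hN⟩
  have hconv (β c : ℝ) (hβ : 0 < β) :
      P.map (fun ω ↦ c + β / 2 * Z₁ ω - β * Real.log |N ω|)
        = P'.map (fun ω' ↦ c + β * (Real.log 2 / 2) + β * Z₂ ω') := by
    simpa using hZ₁std.map_const_add_sub_mul_log_abs_eq_map hβ one_ne_zero hZ₁meas.aemeasurable
      hNlaw hindep hZ₂std hZ₂meas.aemeasurable c
  constructor
  · convert hconv (1 / lam) (1 / lam * (Real.log (x₀ ^ 2 * lam) / 2 + Real.log qp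
      + Real.log (2 * lam) / 2)) (by positivity) using 2 <;> ext ω
    · ring
    · rw [log_two_mul_mul_mul_abs hlam hqp hx₀.ne]
      ring
  · convert hconv 1 0 one_pos using 2 <;> ext ω <;> ring
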